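/- Let h be a reduced integer binary quadratic form with discriminant Δ>0 not a perfect square, whose SL(2,ℤ)-equivalence class is supersymmetric, antisymmetric, or (m+n)-symmetric, and let (c_1,…,c_t) be the period of the minus continued fraction expansion of the quadratic surd ξ⁺(h). Then c_1+c_2+⋯+c_t = 3t. -/

import Mathlib

/-- The value of the binary quadratic form `f = (m, n, k)`, i.e. `m*x^2 + n*y^2 + k*x*y`. -/
def qval (f : ℤ × ℤ × ℤ) (x y : ℤ) : ℤ := f.1 * x ^ 2 + f.2.1 * y ^ 2 + f.2.2 * x * y

/-- The discriminant `k^2 - 4*m*n` of the form `f = (m, n, k)`. -/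
def formDisc (f : ℤ × ℤ × ℤ) : ℤ := f.2.2 ^ 2 - 4 * f.1 * f.2.1

/-- `SL(2,ℤ)`-equivalence of binary quadratic forms. -/
def SLEquiv (f g : ℤ × ℤ × ℤ) : Prop :=
  ∃ a b c d : ℤ, a * d - b * c = 1 ∧
    ∀ x y : ℤ, qval g x y = qval f (a * x + b * y) (c * x + d * y)

/-- The root with the plus sign of `m*ξ^2 + k*ξ + n = 0`, for `f = (m, n, k)`. -/
noncomputable def xiPlus (f : ℤ × ℤ × ℤ) : ℝ :=
  (-(f.2.2 : ℝ) + Real.sqrt ((formDisc f : ℤ) : ℝ)) / (2 * (f.1 : ℝ))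

/-- The root with the minus sign of `m*ξ^2 + k*ξ + n = 0`, for `f = (m, n, k)`. -/
noncomputable def xiMinus (f : ℤ × ℤ × ℤ) : ℝ :=
  (-(f.2.2 : ℝ) - Real.sqrt ((formDisc f : ℤ) : ℝ)) / (2 * (f.1 : ℝ))

/-- The conjugate `(m, n, -k)` of the form `(m, n, k)`. -/
def conjF (f : ℤ × ℤ × ℤ) : ℤ × ℤ × ℤ := (f.1, f.2.1, -f.2.2)

/-- The adjoint `(-n, -m, k)` of the form `(m, n, k)`. -/
def adjF (f : ℤ × ℤ × ℤ) : ℤ × ℤ × ℤ := (-f.2.1, -f.1, f.2.2)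

/-- The antipodal `(-n, -m, -k)` of the form `(m, n, k)`. -/
def antipF (f : ℤ × ℤ × ℤ) : ℤ × ℤ × ℤ := (-f.2.1, -f.1, -f.2.2)

/-- A form `(m, n, k)` is primitive if `gcd(m, n, k) = 1`. -/
def IsPrimitiveForm (f : ℤ × ℤ × ℤ) : Prop := Int.gcd f.1 (Int.gcd f.2.1 f.2.2) = 1

/-- Iterates of the map underlying the minus (modular) continued fraction. -/
noncomputable def minusIter (ξ : ℝ) : ℕ → ℝ
  | 0 => ξ
  | n + 1 => 1 / ((⌈minusIter ξ n⌉ : ℝ) - minusIter ξ n)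

/-- The `n`-th partial quotient of the minus (modular) continued fraction of `ξ`,
so that `ξ = b₀ - 1/(b₁ - 1/(b₂ - ⋯))`. -/
noncomputable def mcfTerm (ξ : ℝ) (n : ℕ) : ℤ := ⌈minusIter ξ n⌉

/-- `s` is the period of the purely periodic minus continued fraction expansion of `ξ`. -/
def IsPurelyPeriodicMCF (s : List ℤ) (ξ : ℝ) : Prop :=
  s ≠ [] ∧
  (∀ j : ℕ, mcfTerm ξ j = s.getD (j % s.length) 0) ∧
  (∀ P : ℕ, 1 ≤ P → (∀ j : ℕ, mcfTerm ξ (j + P) = mcfTerm ξ j) → s.length ≤ P)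

/-- A form `(m, n, k)` is reduced iff `m > 0`, `n > 0`, `k < 0` and `m + n < -k`. -/
def ReducedForm (f : ℤ × ℤ × ℤ) : Prop :=
  0 < f.1 ∧ 0 < f.2.1 ∧ f.2.2 < 0 ∧ f.1 + f.2.1 < -f.2.2


namespace MCF

/-- Tail equivalence of minus continued fractions. -/
def Tail (x y : ℝ) : Prop := ∃ i j, minusIter x i = minusIter y j

lemma iter_add (x : ℝ) (i j : ℕ) : minusIter x (i + j) = minusIter (minusIter x i) j := by
  induction j with
  | zero => rfl
  | succ j ih => rw [← add_assoc]; simp only [minusIter, ih]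

lemma iter_one (x : ℝ) : minusIter x 1 = 1 / ((⌈x⌉ : ℝ) - x) := rfl

lemma Tail.refl (x : ℝ) : Tail x x := ⟨0, 0, rfl⟩

lemma Tail.symm {x y : ℝ} (h : Tail x y) : Tail y x := by
  obtain ⟨i, j, h⟩ := h; exact ⟨j, i, h.symm⟩

lemma Tail.trans {x y z : ℝ} (h : Tail x y) (h' : Tail y z) : Tail x z := by
  obtain ⟨i, j, h⟩ := h
  obtain ⟨k, l, h'⟩ := h'
  refine ⟨i + k, l + j, ?_⟩
  rw [iter_add, h, iter_add, ← h', ← iter_add, ← iter_add, add_comm]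

lemma tail_iter (x : ℝ) (i : ℕ) : Tail x (minusIter x i) := ⟨i, 0, rfl⟩

lemma tail_add_int (x : ℝ) (n : ℤ) : Tail x (x + n) := by
  refine ⟨1, 1, ?_⟩
  rw [iter_one, iter_one, Int.ceil_add_intCast]
  push_cast
  congr 1
  ring

lemma tail_core (n : ℕ) : ∀ y : ℝ, Irrational y → 0 < y → y < n + 1 → Tail (1 + 1 / y) (-y) := by
  induction n with
  | zero =>
    intro y _ h0 h1
    have h2 : minusIter (-y) 1 = 1 / y := by
      rw [iter_one, show ⌈-y⌉ = 0 by rw [Int.ceil_eq_iff]; push_cast at *; constructor <;> linarith]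
      simp
    have h3 : Tail (1 / y) (1 + 1 / y) := by
      have := tail_add_int (1 / y) 1
      rwa [Int.cast_one, add_comm] at this
    have := tail_iter (-y) 1
    rw [h2] at this
    exact (this.trans h3).symm
  | succ n ih =>
    intro y hy h0 h1
    have hne : y ≠ 1 := by
      have := hy.ne_one
      exact this
    rcases lt_or_gt_of_ne hne with h | h
    · have h2 : minusIter (-y) 1 = 1 / y := by
        rw [iter_one, show ⌈-y⌉ = 0 by rw [Int.ceil_eq_iff]; push_cast at *; constructor <;> linarith]
        simp
      have h3 : Tail (1 / y) (1 + 1 / y) := by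
        have := tail_add_int (1 / y) 1
        rwa [Int.cast_one, add_comm] at this
      have := tail_iter (-y) 1
      rw [h2] at this
      exact (this.trans h3).symm
    · have hz : Irrational (y - 1) := by
        have := hy.sub_intCast 1
        simpa using this
      have h2 := ih (y - 1) hz (by linarith) (by push_cast at h1; linarith)
      have h3 : minusIter (1 + 1 / y) 1 = 1 + 1 / (y - 1) := by
        have hy1 : 1 / y < 1 := by rw [div_lt_one h0]; exact h
        have hy0 : 0 < 1 / y := by positivity
        rw [iter_one, show ⌈1 + 1 / y⌉ = 2 by
          rw [Int.ceil_eq_iff]; push_cast; constructor <;> linarith]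
        have : y - 1 ≠ 0 := by linarith
        have h5 : (2 : ℝ) - (1 + 1 / y) = (y - 1) / y := by field_simp; ring
        push_cast
        rw [h5]
        field_simp
        ring
      have h4 := tail_iter (1 + 1 / y) 1
      rw [h3] at h4
      have h5 := tail_add_int (-(y - 1)) (-1)
      have h6 : -(y - 1) + ((-1 : ℤ) : ℝ) = -y := by push_cast; ring
      rw [h6] at h5
      exact (h4.trans h2).trans h5

lemma tail_S_pos (x : ℝ) (hx : Irrational x) (h0 : 0 < x) : Tail x (-1 / x) := by
  rcases lt_or_gt_of_ne hx.ne_one with h | h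
  · obtain ⟨n, hn⟩ := exists_nat_gt (1 / x - 1)
    have hy : Irrational (1 / x - 1) := by
      have := (hx.inv).sub_intCast 1
      simpa using this
    have h1 : 1 < 1 / x := by rw [lt_div_iff₀ h0]; linarith
    have h2 := tail_core n _ hy (by linarith) (by linarith)
    have h3 : minusIter x 1 = 1 + 1 / (1 / x - 1) := by
      rw [iter_one, show ⌈x⌉ = 1 by rw [Int.ceil_eq_iff]; push_cast; constructor <;> linarith]
      have : 1 - x ≠ 0 := by linarith
      have h5 : 1 / x - 1 = (1 - x) / x := by field_simp
      rw [h5]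
      push_cast
      field_simp
      ring
    have h4 := tail_iter x 1
    rw [h3] at h4
    have h5 := tail_add_int (-(1 / x - 1)) (-1)
    have h6 : -(1 / x - 1) + ((-1 : ℤ) : ℝ) = -1 / x := by push_cast; ring
    rw [h6] at h5
    exact (h4.trans h2).trans h5
  · have h3 : minusIter (-1 / x) 1 = x := by
      have h1 : 1 / x < 1 := by rw [div_lt_one h0]; exact h
      have h2 : 0 < 1 / x := by positivity
      have h4 : -1 / x = -(1 / x) := by ring
      rw [iter_one, show ⌈-1 / x⌉ = 0 by
        rw [Int.ceil_eq_iff, h4]; push_cast; constructor <;> linarith]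
      field_simp
      simp
    have h4 := tail_iter (-1 / x) 1
    rw [h3] at h4
    exact h4.symm

lemma tail_S (x : ℝ) (hx : Irrational x) : Tail x (-1 / x) := by
  rcases lt_or_gt_of_ne hx.ne_zero with h | h
  · have h1 : Irrational (-1 / x) := by
      have := hx.inv.neg
      rwa [show -x⁻¹ = -1 / x by ring] at this
    have h2 := tail_S_pos _ h1 (div_pos_of_neg_of_neg (by norm_num) h)
    have h3 : -1 / (-1 / x) = x := by field_simp
    rw [h3] at h2
    exact h2.symm
  · exact tail_S_pos x hx h

lemma lin_ne {x : ℝ} (hx : Irrational x) (c d : ℤ) (h : c ≠ 0 ∨ d ≠ 0) : (c : ℝ) * x + d ≠ 0 := by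
  by_cases hc : c = 0
  · subst hc
    simpa using h
  · exact ((hx.intCast_mul hc).add_intCast d).ne_zero

open Matrix SpecialLinearGroup in
/-- Moebius action on reals. -/
noncomputable def moeb (M : SpecialLinearGroup (Fin 2) ℤ) (x : ℝ) : ℝ :=
  ((M 0 0 : ℝ) * x + M 0 1) / ((M 1 0 : ℝ) * x + M 1 1)

open Matrix SpecialLinearGroup in
lemma bot_ne (M : SpecialLinearGroup (Fin 2) ℤ) : M 1 0 ≠ 0 ∨ M 1 1 ≠ 0 := by
  have := M.det_coe
  rw [Matrix.det_fin_two] at this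
  by_contra! h
  rw [h.1, h.2] at this
  simp at this

lemma gen_e (X Y a b : ℝ) (hY : Y ≠ 0) : a * (X / Y) + b = (a * X + b * Y) / Y := by
  field_simp

open Matrix SpecialLinearGroup in
lemma moeb_mul (M N : SpecialLinearGroup (Fin 2) ℤ) {x : ℝ} (hx : Irrational x) :
    moeb (M * N) x = moeb M (moeb N x) := by
  have h1 := lin_ne hx _ _ (bot_ne N)
  have hmul : ∀ i j, (M * N) i j = M i 0 * N 0 j + M i 1 * N 1 j := by
    intro i j
    exact (Matrix.mul_apply (M := M.1) (N := N.1)).trans (Fin.sum_univ_two _)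
  simp only [moeb, hmul, Int.cast_add, Int.cast_mul]
  have e : ∀ a b : ℝ, a * (((N 0 0 : ℝ) * x + N 0 1) / ((N 1 0 : ℝ) * x + N 1 1)) + b =
      (a * ((N 0 0 : ℝ) * x + N 0 1) + b * ((N 1 0 : ℝ) * x + N 1 1)) / ((N 1 0 : ℝ) * x + N 1 1) := by
    intro a b; exact gen_e _ _ a b h1
  rw [e, e, div_div_div_cancel_right₀ h1]
  congr 1 <;> ring

open Matrix SpecialLinearGroup in
lemma moeb_one (x : ℝ) : moeb 1 x = x := by simp [moeb]

open Matrix SpecialLinearGroup in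
lemma moeb_irr (M : SpecialLinearGroup (Fin 2) ℤ) {x : ℝ} (hx : Irrational x) :
    Irrational (moeb M x) := by
  intro ⟨r, hr⟩
  have h := moeb_mul M⁻¹ M hx
  rw [inv_mul_cancel, moeb_one, ← hr] at h
  apply hx
  refine ⟨(((M⁻¹ 0 0 : ℤ) : ℚ) * r + ((M⁻¹ 0 1 : ℤ) : ℚ)) / (((M⁻¹ 1 0 : ℤ) : ℚ) * r + ((M⁻¹ 1 1 : ℤ) : ℚ)), ?_⟩
  rw [h, moeb]
  push_cast
  rfl

open Matrix SpecialLinearGroup in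
lemma tail_moeb (M : SpecialLinearGroup (Fin 2) ℤ) :
    ∀ x : ℝ, Irrational x → Tail x (moeb M x) := by
  have hM : M ∈ Subgroup.closure {ModularGroup.S, ModularGroup.T} := by
    rw [SpecialLinearGroup.SL2Z_generators]; trivial
  induction hM using Subgroup.closure_induction with
  | mem y hy =>
    intro x hx
    rcases hy with rfl | rfl
    · have := tail_S x hx
      have e : moeb ModularGroup.S x = -1 / x := by
        simp [moeb, ModularGroup.S]
      rwa [e]
    · have := tail_add_int x 1
      have e : moeb ModularGroup.T x = x + (1 : ℤ) := by
        simp [moeb, ModularGroup.T]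
      rwa [e]
  | one => intro x hx; rw [moeb_one]; exact Tail.refl x
  | mul M N _ _ h1 h2 =>
    intro x hx
    rw [moeb_mul M N hx]
    exact (h2 x hx).trans (h1 _ (moeb_irr N hx))
  | inv M _ h =>
    intro x hx
    have h1 := h _ (moeb_irr M⁻¹ hx)
    rw [← moeb_mul M M⁻¹ hx, mul_inv_cancel, moeb_one] at h1
    exact h1.symm

/-- Coefficients of the transformed form. -/
def tr (f : ℤ × ℤ × ℤ) (a b c d : ℤ) : ℤ × ℤ × ℤ :=
  (qval f a c, qval f b d, 2 * f.1 * a * b + 2 * f.2.1 * c * d + f.2.2 * (a * d + b * c))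

lemma qval_tr (f : ℤ × ℤ × ℤ) (a b c d x y : ℤ) :
    qval (tr f a b c d) x y = qval f (a * x + b * y) (c * x + d * y) := by
  simp only [qval, tr]; ring

lemma form_ext (f g : ℤ × ℤ × ℤ) (h : ∀ x y, qval f x y = qval g x y) : f = g := by
  obtain ⟨m, n, k⟩ := f
  obtain ⟨m', n', k'⟩ := g
  have h1 := h 1 0
  have h2 := h 0 1
  have h3 := h 1 1
  simp only [qval] at h1 h2 h3
  simp only [Prod.mk.injEq]
  refine ⟨?_, ?_, ?_⟩ <;> linarith

lemma slequiv_iff (f g : ℤ × ℤ × ℤ) :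
    SLEquiv f g ↔ ∃ a b c d : ℤ, a * d - b * c = 1 ∧ g = tr f a b c d := by
  constructor
  · rintro ⟨a, b, c, d, h, h'⟩
    exact ⟨a, b, c, d, h, form_ext _ _ fun x y => by rw [h', qval_tr]⟩
  · rintro ⟨a, b, c, d, h, rfl⟩
    exact ⟨a, b, c, d, h, fun x y => qval_tr _ _ _ _ _ _ _⟩

lemma sl_refl (f : ℤ × ℤ × ℤ) : SLEquiv f f :=
  ⟨1, 0, 0, 1, by norm_num, fun x y => by simp⟩

lemma sl_symm {f g : ℤ × ℤ × ℤ} (h : SLEquiv f g) : SLEquiv g f := by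
  obtain ⟨a, b, c, d, h, h'⟩ := h
  refine ⟨d, -b, -c, a, by linarith, fun x y => ?_⟩
  rw [h']
  congr 1
  · linear_combination (-x) * h
  · linear_combination (-y) * h

lemma sl_trans {f g e : ℤ × ℤ × ℤ} (h : SLEquiv f g) (h' : SLEquiv g e) : SLEquiv f e := by
  obtain ⟨a, b, c, d, h, h1⟩ := h
  obtain ⟨a', b', c', d', h', h2⟩ := h'
  refine ⟨a * a' + b * c', a * b' + b * d', c * a' + d * c', c * b' + d * d', ?_, fun x y => ?_⟩
  · linear_combination h' + (a' * d' - b' * c') * h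
  · rw [h2, h1]; congr 1 <;> ring

lemma disc_tr (f : ℤ × ℤ × ℤ) (a b c d : ℤ) (h : a * d - b * c = 1) :
    formDisc (tr f a b c d) = formDisc f := by
  have : formDisc (tr f a b c d) = formDisc f * (a * d - b * c) ^ 2 := by
    simp only [formDisc, tr, qval]; ring
  rw [this, h]; ring

/-- Reduced forms of discriminant `D`. -/
def Good (D : ℤ) (g : ℤ × ℤ × ℤ) : Prop :=
  0 < g.1 ∧ 0 < g.2.1 ∧ g.1 + g.2.1 + g.2.2 < 0 ∧ formDisc g = D

lemma Good.pos {D : ℤ} {g : ℤ × ℤ × ℤ} (h : Good D g) : 0 < D := by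
  obtain ⟨h1, h2, h3, rfl⟩ := h
  simp only [formDisc]
  nlinarith [sq_nonneg (g.1 - g.2.1)]

lemma sqrt_irr {D : ℤ} (hD : ¬ IsSquare D) (h0 : 0 < D) : Irrational (Real.sqrt (D : ℝ)) :=
  (irrational_sqrt_intCast_iff).2 ⟨hD, h0.le⟩

lemma xi_irr {D : ℤ} (hD : ¬ IsSquare D) {g : ℤ × ℤ × ℤ} (h : Good D g) :
    Irrational (xiPlus g) := by
  have h0 := h.pos
  obtain ⟨h1, h2, h3, rfl⟩ := h
  have := ((sqrt_irr hD h0).intCast_add (-g.2.2)).div_intCast (m := 2 * g.1) (by lia)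
  simp only [xiPlus]
  push_cast at this
  exact this

lemma xi_inj {D : ℤ} (hD : ¬ IsSquare D) {g g' : ℤ × ℤ × ℤ} (h : Good D g) (h' : Good D g')
    (e : xiPlus g = xiPlus g') : g = g' := by
  have h0 := h.pos
  obtain ⟨m, n, k⟩ := g
  obtain ⟨m', n', k'⟩ := g'
  obtain ⟨h1, h2, h3, h4⟩ := h
  obtain ⟨h1', h2', h3', h4'⟩ := h'
  have hirr := sqrt_irr hD h0
  simp only [xiPlus, h4, h4'] at e
  change 0 < m at h1
  change 0 < m' at h1'
  have p : (0 : ℝ) < m := by exact_mod_cast h1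
  have p' : (0 : ℝ) < m' := by exact_mod_cast h1'
  rw [div_eq_div_iff (by positivity) (by positivity)] at e
  have e2 : ((m' - m : ℤ) : ℝ) * Real.sqrt D + ((m * k' - m' * k : ℤ) : ℝ) = 0 := by
    push_cast; linarith
  have e3 : m' = m := by
    by_contra hne
    exact lin_ne hirr _ _ (Or.inl (by lia)) e2
  subst e3
  have e4 : m' * k' - m' * k = 0 := by
    have : ((m' * k' - m' * k : ℤ) : ℝ) = 0 := by simpa using e2
    exact_mod_cast this
  have e5 : k' = k := by
    have : m' * (k' - k) = 0 := by linarith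
    rcases mul_eq_zero.1 this with h | h <;> lia
  subst e5
  simp only [formDisc] at h4 h4'
  have e6 : m' * (n' - n) = 0 := by linarith
  rcases mul_eq_zero.1 e6 with h | h
  · lia
  · simp only [Prod.mk.injEq, true_and, and_true]; lia

lemma xi_tr {D : ℤ} (h0 : 0 < D) (f : ℤ × ℤ × ℤ) (hf : formDisc f = D)
    (hm : f.1 ≠ 0) (a b c d : ℤ) (h : a * d - b * c = 1) (hm' : (tr f a b c d).1 ≠ 0)
    (hirr : Irrational (xiPlus (tr f a b c d))) :
    xiPlus f = (a * xiPlus (tr f a b c d) + b) / (c * xiPlus (tr f a b c d) + d) := by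
  have hY : (c : ℝ) * xiPlus (tr f a b c d) + d ≠ 0 := by
    apply lin_ne hirr
    by_contra! hh
    rw [hh.1, hh.2] at h; simp at h
  set g := tr f a b c d with hg
  have hgD : formDisc g = D := by rw [hg, disc_tr _ _ _ _ _ h, hf]
  set x := xiPlus g with hx
  set r := Real.sqrt (D : ℝ) with hr
  have hr2 : r ^ 2 = D := Real.sq_sqrt (by exact_mod_cast h0.le)
  have hm'R : (g.1 : ℝ) ≠ 0 := by exact_mod_cast hm'
  have hmR : (f.1 : ℝ) ≠ 0 := by exact_mod_cast hm
  have e1 : 2 * (g.1 : ℝ) * x + g.2.2 = r := by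
    rw [hx, xiPlus, hgD, ← hr]; field_simp; ring
  have e2 : (g.1 : ℝ) * x ^ 2 + g.2.2 * x + g.2.1 = 0 := by
    have : (g.2.2 : ℝ) ^ 2 - 4 * g.1 * g.2.1 = D := by
      rw [← hgD]; simp only [formDisc]; push_cast; ring
    have : 4 * (g.1 : ℝ) * ((g.1 : ℝ) * x ^ 2 + g.2.2 * x + g.2.1) = 0 := by
      have e3 := congrArg (· ^ 2) e1
      rw [hr2] at e3
      linear_combination e3 - this
    rcases mul_eq_zero.1 this with h | h
    · exact absurd h (by simpa using hm'R)
    · exact h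
  have g1 : (g.1 : ℝ) = f.1 * a ^ 2 + f.2.1 * c ^ 2 + f.2.2 * a * c := by
    simp only [hg, tr, qval]; push_cast; ring
  have g2 : (g.2.1 : ℝ) = f.1 * b ^ 2 + f.2.1 * d ^ 2 + f.2.2 * b * d := by
    simp only [hg, tr, qval]; push_cast; ring
  have g3 : (g.2.2 : ℝ) = 2 * f.1 * a * b + 2 * f.2.1 * c * d + f.2.2 * (a * d + b * c) := by
    simp only [hg, tr]; push_cast; ring
  have hdet : (a : ℝ) * d - b * c = 1 := by exact_mod_cast h
  rw [xiPlus, hf, ← hr, div_eq_div_iff (by simpa using hmR) hY]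
  rw [← e1]
  rw [g1, g2, g3] at e2
  rw [g1, g3]
  linear_combination (2 * c) * e2 + (2 * f.1 * (a * x + b) + f.2.2 * (c * x + d)) * hdet

lemma lt_xi {D : ℤ} {g : ℤ × ℤ × ℤ} (h : Good D g) (j : ℤ) (hj : 1 ≤ j) :
    qval g j 1 < 0 ↔ (j : ℝ) < xiPlus g := by
  have h0 := h.pos
  obtain ⟨h1, h2, h3, h4⟩ := h
  have p : (0 : ℝ) < g.1 := by exact_mod_cast h1
  have hr := Real.sq_sqrt (show (0 : ℝ) ≤ D by exact_mod_cast h0.le)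
  have hr0 := Real.sqrt_nonneg (D : ℝ)
  rw [xiPlus, h4, lt_div_iff₀ (by positivity)]
  set r := Real.sqrt (D : ℝ)
  have hq : ∀ j : ℤ, qval g j 1 < 0 ↔ |2 * (g.1 : ℝ) * j + g.2.2| < r := by
    intro j
    rw [← abs_of_nonneg hr0, ← sq_lt_sq, hr]
    have : (2 * (g.1 : ℝ) * j + g.2.2) ^ 2 < D ↔ (2 * g.1 * j + g.2.2) ^ 2 < D := by
      exact_mod_cast Iff.rfl
    rw [this, ← h4]
    simp only [qval, formDisc]
    constructor
    · intro h; nlinarith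
    · intro h; by_contra! h5; nlinarith
  have hone := (hq 1).1 (by simp only [qval]; linarith)
  rw [abs_lt] at hone
  rw [hq, abs_lt]
  have hj' : (1 : ℝ) ≤ j := by exact_mod_cast hj
  have hjm := mul_le_mul_of_nonneg_left hj' p.le
  push_cast at hone
  constructor
  · rintro ⟨_, h⟩; linarith
  · intro h; constructor <;> linarith [hone.1]

/-- The partial quotient. -/
noncomputable def cc (g : ℤ × ℤ × ℤ) : ℤ := ⌈xiPlus g⌉

/-- The reduction step. -/
noncomputable def step (g : ℤ × ℤ × ℤ) : ℤ × ℤ × ℤ := tr g (cc g) (-1) 1 0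

lemma sl_step (g : ℤ × ℤ × ℤ) : SLEquiv g (step g) :=
  (slequiv_iff _ _).2 ⟨cc g, -1, 1, 0, by ring, rfl⟩

lemma two_le_cc {D : ℤ} {g : ℤ × ℤ × ℤ} (h : Good D g) : 2 ≤ cc g := by
  have := (lt_xi h 1 le_rfl).1 (by have := h.2.2.1; simp only [qval]; linarith)
  have h2 : (1 : ℤ) < ⌈xiPlus g⌉ := Int.lt_ceil.2 this
  simp only [cc]; lia

lemma neg_iff {D : ℤ} {g : ℤ × ℤ × ℤ} (h : Good D g) (j : ℤ) (hj : 1 ≤ j) :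
    qval g j 1 < 0 ↔ j < cc g := by
  rw [lt_xi h j hj, cc, Int.lt_ceil]

lemma good_step {D : ℤ} (hD : ¬ IsSquare D) {g : ℤ × ℤ × ℤ} (h : Good D g) : Good D (step g) := by
  have h2 := two_le_cc h
  have hd : formDisc (step g) = D := by
    rw [step, disc_tr _ _ _ _ _ (by ring)]; exact h.2.2.2
  have a1 := (neg_iff h (cc g - 1) (by lia)).2 (by lia)
  have a2 := (not_congr (neg_iff h (cc g) (by lia))).2 (by lia)
  refine ⟨?_, ?_, ?_, hd⟩
  · have e : (step g).1 = qval g (cc g) 1 := rfl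
    rw [e]
    rcases lt_trichotomy (qval g (cc g) 1) 0 with h | h | h
    · exact absurd h a2
    · exfalso; apply hD
      rw [← hd, formDisc, e, h]
      exact ⟨(step g).2.2, by ring⟩
    · exact h
  · have := h.1
    simp only [step, tr, qval]; linarith
  · have : (step g).1 + (step g).2.1 + (step g).2.2 = qval g (cc g - 1) 1 := by
      simp only [step, tr, qval]; ring
    rw [this]; exact a1

lemma xi_step {D : ℤ} (hD : ¬ IsSquare D) {g : ℤ × ℤ × ℤ} (h : Good D g) :
    xiPlus (step g) = 1 / ((⌈xiPlus g⌉ : ℝ) - xiPlus g) := by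
  have hg' := good_step hD h
  have hirr := xi_irr hD hg'
  have := xi_tr h.pos g h.2.2.2 h.1.ne' (cc g) (-1) 1 0 (by ring) hg'.1.ne' hirr
  change _ = (_ * xiPlus (step g) + _) / (_ * xiPlus (step g) + _) at this
  have hne := hirr.ne_zero
  have e : (⌈xiPlus g⌉ : ℝ) - xiPlus g = 1 / xiPlus (step g) := by
    have h2 : xiPlus g = cc g - 1 / xiPlus (step g) := by
      rw [this]
      push_cast
      rw [one_mul, add_zero]
      field_simp
      ring
    change (cc g : ℝ) - _ = _
    linarith
  rw [e]; field_simp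

lemma convex_neg (a b c x y z : ℤ) (ha : 0 < a) (hxy : x ≤ y) (hyz : y ≤ z)
    (hx : a * x ^ 2 + b * x + c < 0) (hz : a * z ^ 2 + b * z + c < 0) :
    a * y ^ 2 + b * y + c < 0 := by
  rcases hxy.eq_or_lt with rfl | h1
  · exact hx
  rcases hyz.eq_or_lt with rfl | h2
  · exact hz
  by_contra! hy
  have e : (z - x) * (a * y ^ 2 + b * y + c) = (z - y) * (a * x ^ 2 + b * x + c) +
    (y - x) * (a * z ^ 2 + b * z + c) - a * ((z - y) * (y - x) * (z - x)) := by ring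
  have i1 : 0 ≤ (z - x) * (a * y ^ 2 + b * y + c) := mul_nonneg (by lia) hy
  have i2 : (z - y) * (a * x ^ 2 + b * x + c) < 0 := mul_neg_of_pos_of_neg (by lia) hx
  have i3 : (y - x) * (a * z ^ 2 + b * z + c) < 0 := mul_neg_of_pos_of_neg (by lia) hz
  have i4 : 0 < a * ((z - y) * (y - x) * (z - x)) :=
    mul_pos ha (mul_pos (mul_pos (by lia) (by lia)) (by lia))
  linarith

lemma step_inj_aux {D : ℤ} {g g' : ℤ × ℤ × ℤ} (h : Good D g) (h' : Good D g') (c c' : ℤ)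
    (e : tr g c (-1) 1 0 = tr g' c' (-1) 1 0) : c' ≤ c := by
  by_contra! hlt
  set p := tr g c (-1) 1 0 with hp
  have ep : ∀ x y, qval g x y = qval p y (c * y - x) := by
    intro x y; rw [hp, qval_tr]; congr 1 <;> ring
  have ep' : ∀ x y, qval g' x y = qval p y (c' * y - x) := by
    intro x y; rw [e, qval_tr]; congr 1 <;> ring
  have a1 : 0 < qval p 1 c := by
    have := ep 0 1
    have e2 : qval g 0 1 = g.2.1 := by simp [qval]
    rw [e2] at this; simp only [mul_one, sub_zero] at this
    rw [← this]; exact h.2.1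
  have a2 : qval p 1 (c' - 1) < 0 := by
    have := ep' 1 1
    simp only [mul_one] at this
    rw [← this]; have := h'.2.2.1; simp only [qval]; linarith
  have a3 : qval p 1 (c - 1) < 0 := by
    have := ep 1 1
    simp only [mul_one] at this
    rw [← this]; have := h.2.2.1; simp only [qval]; linarith
  have a4 : 0 < p.2.1 := by
    have := h.1
    simp only [hp, tr, qval]; linarith
  have := convex_neg p.2.1 p.2.2 p.1 (c - 1) c (c' - 1) a4 (by lia) (by lia)
    (by simp only [qval] at a3; linarith) (by simp only [qval] at a2; linarith)
  simp only [qval] at a1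
  linarith

lemma step_inj {D : ℤ} {g g' : ℤ × ℤ × ℤ} (h : Good D g) (h' : Good D g')
    (e : step g = step g') : g = g' := by
  have e1 := step_inj_aux h h' _ _ e
  have e2 := step_inj_aux h' h _ _ e.symm
  have e3 : cc g = cc g' := le_antisymm e2 e1
  apply form_ext
  intro x y
  have := congrArg (fun f => qval f y (cc g * y - x)) e
  simp only [step, qval_tr, ← e3] at this
  ring_nf at this
  exact this

lemma good_finite (D : ℤ) : {g | Good D g}.Finite := by
  apply Set.Finite.subset (Set.finite_Icc ((0 : ℤ), (0 : ℤ), -(D + D + D + D)) (D, D, (0 : ℤ)))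
  rintro ⟨m, n, k⟩ ⟨h1, h2, h3, h4⟩
  simp only [formDisc] at *
  obtain ⟨r, rfl⟩ : ∃ r, k = -(m + n + r) := ⟨-(m + n + k), by ring⟩
  have hr : 1 ≤ r := by linarith
  have e : (m - n) ^ 2 + 2 * (r * (m + n)) + r ^ 2 = D := by rw [← h4]; ring
  have i1 : m + n ≤ r * (m + n) := by nlinarith
  have i2 : r ≤ r ^ 2 := by nlinarith
  have i3 := sq_nonneg (m - n)
  simp only [Set.mem_Icc, Prod.mk_le_mk]
  refine ⟨⟨by linarith, by linarith, by linarith⟩, by linarith, by linarith, by linarith⟩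

lemma tail_of_sl {D : ℤ} (hD : ¬ IsSquare D) {f g : ℤ × ℤ × ℤ} (hf : Good D f) (hg : Good D g)
    (h : SLEquiv f g) : Tail (xiPlus f) (xiPlus g) := by
  obtain ⟨a, b, c, d, h, e⟩ := (slequiv_iff _ _).1 h
  have hirr := xi_irr hD hg
  have := xi_tr hf.pos f hf.2.2.2 hf.1.ne' a b c d h (e ▸ hg.1.ne') (e ▸ hirr)
  rw [← e] at this
  have h2 := tail_moeb ⟨!![a, b; c, d], by rw [Matrix.det_fin_two_of, h]⟩ _ hirr
  have h3 : moeb ⟨!![a, b; c, d], by rw [Matrix.det_fin_two_of, h]⟩ (xiPlus g) = xiPlus f := by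
    rw [this]; rfl
  rw [h3] at h2
  exact h2.symm

/-- The type of reduced forms. -/
abbrev X (D : ℤ) := {g : ℤ × ℤ × ℤ // Good D g}

/-- The reduction step on reduced forms. -/
noncomputable def stp {D : ℤ} (hD : ¬ IsSquare D) (x : X D) : X D := ⟨step x.1, good_step hD x.2⟩

lemma stp_inj {D : ℤ} (hD : ¬ IsSquare D) : Function.Injective (stp hD) := by
  intro x y h
  exact Subtype.ext (step_inj x.2 y.2 (congrArg Subtype.val h))

lemma iter_stp {D : ℤ} (hD : ¬ IsSquare D) (x : X D) (i : ℕ) :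
    minusIter (xiPlus x.1) i = xiPlus ((stp hD)^[i] x).1 := by
  induction i with
  | zero => rfl
  | succ i ih =>
    rw [Function.iterate_succ_apply']
    simp only [minusIter, ih]
    exact (xi_step hD ((stp hD)^[i] x).2).symm

lemma sl_iter {D : ℤ} (hD : ¬ IsSquare D) (x : X D) (i : ℕ) :
    SLEquiv x.1 ((stp hD)^[i] x).1 := by
  induction i with
  | zero => exact sl_refl _
  | succ i ih =>
    rw [Function.iterate_succ_apply']
    exact sl_trans ih (sl_step _)

lemma exists_period {D : ℤ} (hD : ¬ IsSquare D) (x : X D) :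
    ∃ n, 0 < n ∧ (stp hD)^[n] x = x := by
  haveI : Finite (X D) := (good_finite D).to_subtype
  obtain ⟨i, j, hne, e⟩ := Finite.exists_ne_map_eq_of_infinite (fun n : ℕ => (stp hD)^[n] x)
  wlog hlt : i < j generalizing i j
  · exact this j i hne.symm e.symm (by lia)
  refine ⟨j - i, by lia, ?_⟩
  apply (stp_inj hD).iterate i
  rw [← Function.iterate_add_apply, Nat.add_sub_cancel' hlt.le]
  exact e.symm

lemma mem_orbit {D : ℤ} (hD : ¬ IsSquare D) (x y : X D) (h : SLEquiv x.1 y.1) :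
    ∃ i, (stp hD)^[i] x = y := by
  obtain ⟨i, j, e⟩ := tail_of_sl hD x.2 y.2 h
  rw [iter_stp hD, iter_stp hD] at e
  have e2 : (stp hD)^[i] x = (stp hD)^[j] y := Subtype.ext
    (xi_inj hD (Subtype.prop _) (Subtype.prop _) e)
  obtain ⟨n, hn, hy⟩ := exists_period hD y
  have h1 : (stp hD)^[n * j] y = y := by
    have : Function.IsPeriodicPt (stp hD) n y := hy
    exact this.mul_const j
  refine ⟨(n * j - j) + i, ?_⟩
  rw [Function.iterate_add_apply, e2, ← Function.iterate_add_apply,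
    Nat.sub_add_cancel (Nat.le_mul_of_pos_left j hn), h1]

/-- The form attached to a vertex of negative type. -/
def phi (g : ℤ × ℤ × ℤ) (j : ℤ) : ℤ × ℤ × ℤ := tr g (-j) (j + 1) (-1) 1

/-- Inverse of `phi`. -/
def psi (h : ℤ × ℤ × ℤ) (j : ℤ) : ℤ × ℤ × ℤ := tr h 1 (-(j + 1)) 1 (-j)

lemma psi_phi (g : ℤ × ℤ × ℤ) (j : ℤ) : psi (phi g j) j = g := by
  apply form_ext; intro x y
  rw [psi, phi, qval_tr, qval_tr]; congr 1 <;> ring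

lemma phi_psi (g : ℤ × ℤ × ℤ) (j : ℤ) : phi (psi g j) j = g := by
  apply form_ext; intro x y
  rw [psi, phi, qval_tr, qval_tr]; congr 1 <;> ring

lemma sl_phi (g : ℤ × ℤ × ℤ) (j : ℤ) : SLEquiv g (phi g j) :=
  (slequiv_iff _ _).2 ⟨_, _, _, _, by ring, rfl⟩

/-- Negative type vertices. -/
def NegV (D : ℤ) (g : ℤ × ℤ × ℤ) : Prop :=
  g.1 < 0 ∧ g.2.1 < 0 ∧ 0 < g.1 + g.2.1 + g.2.2 ∧ formDisc g = D

lemma neg_phi {D : ℤ} {g : ℤ × ℤ × ℤ} (h : Good D g) {j : ℤ} (h1 : 1 ≤ j) (h2 : j + 1 < cc g) :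
    NegV D (phi g j) := by
  refine ⟨?_, ?_, ?_, ?_⟩
  · have := (neg_iff h j h1).2 (by lia)
    have e : (phi g j).1 = qval g j 1 := by simp only [phi, tr, qval]; ring
    rwa [e]
  · exact (neg_iff h (j + 1) (by lia)).2 h2
  · have e : (phi g j).1 + (phi g j).2.1 + (phi g j).2.2 = g.1 := by
      simp only [phi, tr, qval]; ring
    rw [e]; exact h.1
  · rw [phi, disc_tr _ _ _ _ _ (by ring)]; exact h.2.2.2

lemma phi_inj_aux {D : ℤ} {g g' : ℤ × ℤ × ℤ} (h : Good D g) (h' : Good D g') {j j' : ℤ}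
    (h1 : 1 ≤ j) (h3 : j < cc g) (e : phi g j = phi g' j') : j' ≤ j := by
  by_contra! hlt
  set p := phi g j with hp
  have ep : ∀ x y, qval g x y = qval p (x - (j + 1) * y) (x - j * y) := by
    intro x y; rw [hp, phi, qval_tr]; congr 1 <;> ring
  have ep' : ∀ x y, qval g' x y = qval p (x - (j' + 1) * y) (x - j' * y) := by
    intro x y; rw [e, phi, qval_tr]; congr 1 <;> ring
  have b1 : 0 < qval p (-(j + 1)) (-j) := by
    have := ep 0 1
    have e2 : qval g 0 1 = g.2.1 := by simp [qval]
    rw [e2] at this; simp only [mul_one, zero_sub] at this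
    rw [← this]; exact h.2.1
  have b2 : qval p (-j') (1 - j') < 0 := by
    have := ep' 1 1
    rw [show (1 : ℤ) - (j' + 1) * 1 = -j' by ring, mul_one] at this
    rw [← this]; have := h'.2.2.1; simp only [qval]; linarith
  have b3 : qval p (-j) (1 - j) < 0 := by
    have := ep 1 1
    rw [show (1 : ℤ) - (j + 1) * 1 = -j by ring, mul_one] at this
    rw [← this]; have := h.2.2.1; simp only [qval]; linarith
  have b4 : 0 < p.1 + p.2.1 + p.2.2 := by
    have e : (phi g j).1 + (phi g j).2.1 + (phi g j).2.2 = g.1 := by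
      simp only [phi, tr, qval]; ring
    rw [hp, e]; exact h.1
  have := convex_neg (p.1 + p.2.1 + p.2.2) (-(2 * p.2.1 + p.2.2)) p.2.1 j (j + 1) j' b4
    (by lia) (by lia)
    (by simp only [qval] at b3; linarith) (by simp only [qval] at b2; linarith)
  simp only [qval] at b1
  linarith

lemma phi_surj {D : ℤ} (hD : ¬ IsSquare D) {h : ℤ × ℤ × ℤ} (hh : NegV D h) :
    ∃ g j, Good D g ∧ 1 ≤ j ∧ j + 1 < cc g ∧ phi g j = h := by
  obtain ⟨h1, h2, h3, h4⟩ := hh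
  have ex : ∃ n : ℕ, 0 ≤ qval h (n + 2) (n + 1) := by
    refine ⟨(2 * h.1 + h.2.2).natAbs + h.1.natAbs, ?_⟩
    push_cast
    have i1 := neg_abs_le (2 * h.1 + h.2.2)
    have i2 := neg_abs_le h.1
    have i3 := abs_nonneg (2 * h.1 + h.2.2)
    have i4 := abs_nonneg h.1
    set u := |2 * h.1 + h.2.2|
    set v := |h.1|
    have e : qval h (u + v + 2) (u + v + 1) = (h.1 + h.2.1 + h.2.2 - 1) * (u + v + 1) ^ 2 +
        (2 * h.1 + h.2.2 + u) * (u + v + 1) + (v + 1) * (u + v) + (v + 1 + h.1) := by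
      simp only [qval]; ring
    rw [e]
    have j1 : 0 ≤ (h.1 + h.2.1 + h.2.2 - 1) * (u + v + 1) ^ 2 :=
      mul_nonneg (by linarith) (sq_nonneg _)
    have j2 : 0 ≤ (2 * h.1 + h.2.2 + u) * (u + v + 1) := mul_nonneg (by linarith) (by linarith)
    have j3 : 0 ≤ (v + 1) * (u + v) := mul_nonneg (by linarith) (by linarith)
    linarith
  classical
  let n := Nat.find ex
  have hn : 0 ≤ qval h (n + 2) (n + 1) := Nat.find_spec ex
  have hlt : qval h (n + 1) n < 0 := by
    rcases Nat.eq_zero_or_pos n with h0 | h0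
    · rw [h0]; simp only [qval]; push_cast; linarith
    · have := Nat.find_min ex (m := n - 1) (by lia)
      rw [not_le] at this
      have e : ((n - 1 : ℕ) : ℤ) = n - 1 := by push_cast [h0]; ring
      rw [e] at this
      ring_nf at this ⊢
      exact this
  have hd : formDisc (psi h (n + 1)) = D := by
    rw [psi, disc_tr _ _ _ _ _ (by ring)]; exact h4
  have e1 : (psi h (n + 1)).1 = h.1 + h.2.1 + h.2.2 := by simp only [psi, tr, qval]; ring
  have e2 : (psi h (n + 1)).2.1 = qval h (n + 2) (n + 1) := by simp only [psi, tr, qval]; ring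
  have e3 : (psi h (n + 1)).1 + (psi h (n + 1)).2.1 + (psi h (n + 1)).2.2 = qval h (n + 1) n := by
    simp only [psi, tr, qval]; ring
  have hg : Good D (psi h (n + 1)) := by
    refine ⟨by rw [e1]; exact h3, ?_, by rw [e3]; exact hlt, hd⟩
    rw [e2]
    rcases hn.eq_or_lt with h | h
    · exfalso; apply hD
      rw [← hd, formDisc, e2, ← h]
      exact ⟨(psi _ _).2.2, by ring⟩
    · exact h
  refine ⟨psi h (n + 1), n + 1, hg, by lia, ?_, phi_psi _ _⟩
  rw [← neg_iff hg _ (by lia)]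
  have : qval (psi h (n + 1)) (n + 1 + 1) 1 = h.2.1 := by
    rw [psi, qval_tr]; simp only [qval]; ring
  rw [this]; exact h2

open Classical in
/-- Reduced forms in the class of `x`. -/
noncomputable def cls {D : ℤ} (x : X D) : Finset (X D) :=
  haveI : Finite (X D) := (good_finite D).to_subtype
  haveI := Fintype.ofFinite (X D)
  Finset.univ.filter fun y => SLEquiv x.1 y.1

lemma mem_cls {D : ℤ} (x y : X D) : y ∈ cls x ↔ SLEquiv x.1 y.1 := by
  simp [cls]

lemma sum_cls {D : ℤ} (hD : ¬ IsSquare D) (x : X D) (σ : ℤ × ℤ × ℤ → ℤ × ℤ × ℤ)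
    (h1 : ∀ g, SLEquiv x.1 g → SLEquiv x.1 (σ g)) (h2 : ∀ g, σ (σ g) = g)
    (h3 : ∀ g, NegV D g → Good D (σ g)) (h4 : ∀ g, Good D g → NegV D (σ g)) :
    ∑ y ∈ cls x, (cc y.1 - 2) = (cls x).card := by
  classical
  have key : ((cls x).sigma fun y => Finset.Ico (1 : ℤ) (cc y.1 - 1)).card = (cls x).card := by
    refine Finset.card_bij
      (fun p hp => ⟨σ (phi p.1.1 p.2), h3 _ (neg_phi p.1.2 ?_ ?_)⟩) ?_ ?_ ?_
    · rw [Finset.mem_sigma, Finset.mem_Ico] at hp; exact hp.2.1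
    · rw [Finset.mem_sigma, Finset.mem_Ico] at hp; linarith [hp.2.2]
    · intro p hp
      rw [Finset.mem_sigma, mem_cls] at hp
      rw [mem_cls]
      exact h1 _ (sl_trans hp.1 (sl_phi _ _))
    · rintro ⟨g, j⟩ hp ⟨g', j'⟩ hp' e
      rw [Finset.mem_sigma, Finset.mem_Ico] at hp hp'
      have e1 := congrArg σ (congrArg Subtype.val e)
      simp only [h2] at e1
      simp only at hp hp'
      have i1 := phi_inj_aux g.2 g'.2 hp.2.1 (by linarith [hp.2.2]) e1
      have i2 := phi_inj_aux g'.2 g.2 hp'.2.1 (by linarith [hp'.2.2]) e1.symm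
      have i3 : j = j' := le_antisymm i2 i1
      subst i3
      have : g = g' := Subtype.ext (by rw [← psi_phi g.1 j, e1, psi_phi])
      subst this
      rfl
    · intro y hy
      rw [mem_cls] at hy
      obtain ⟨g, j, hg, hj, hj2, e⟩ := phi_surj hD (h4 _ y.2)
      refine ⟨⟨⟨g, hg⟩, j⟩, ?_, ?_⟩
      · rw [Finset.mem_sigma, Finset.mem_Ico, mem_cls]
        refine ⟨?_, hj, by simp only; linarith⟩
        have := h1 _ hy
        rw [← e] at this
        exact sl_trans this (sl_symm (sl_phi _ _))
      · apply Subtype.ext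
        simp only [e, h2]
  rw [← key, Finset.card_sigma]
  push_cast
  apply Finset.sum_congr rfl
  intro y _
  rw [Int.card_Ico]
  have := two_le_cc y.2
  rw [Int.toNat_of_nonneg (by lia)]
  ring

lemma sum_orbit {D : ℤ} (hD : ¬ IsSquare D) (x : X D) :
    ∃ P, 0 < P ∧ (stp hD)^[P] x = x ∧ (cls x).card = P ∧
      ∑ y ∈ cls x, (cc y.1 - 2) = ∑ i ∈ Finset.range P, (cc ((stp hD)^[i] x).1 - 2) := by
  classical
  obtain ⟨n, hn, hx⟩ := exists_period hD x
  have hP : 0 < Function.minimalPeriod (stp hD) x :=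
    Function.IsPeriodicPt.minimalPeriod_pos hn hx
  have hinj : Set.InjOn (fun i => (stp hD)^[i] x)
      (Finset.range (Function.minimalPeriod (stp hD) x) : Set ℕ) := by
    have := Function.iterate_injOn_Iio_minimalPeriod (f := stp hD) (x := x)
    rwa [Finset.coe_range]
  have himg : cls x = (Finset.range (Function.minimalPeriod (stp hD) x)).image
      (fun i => (stp hD)^[i] x) := by
    ext y
    rw [mem_cls, Finset.mem_image]
    constructor
    · intro h
      obtain ⟨i, hi⟩ := mem_orbit hD x y h
      refine ⟨i % Function.minimalPeriod (stp hD) x, Finset.mem_range.2 (Nat.mod_lt _ hP), ?_⟩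
      rw [Function.iterate_mod_minimalPeriod_eq, hi]
    · rintro ⟨i, _, rfl⟩
      exact sl_iter hD x i
  refine ⟨_, hP, Function.iterate_minimalPeriod, ?_, ?_⟩
  · rw [himg, Finset.card_image_of_injOn hinj, Finset.card_range]
  · rw [himg, Finset.sum_image hinj]

lemma sum_periodic (u : ℕ → ℤ) (P : ℕ) (h : ∀ j, u (j + P) = u j) (q : ℕ) :
    ∑ i ∈ Finset.range (q * P), u i = q * ∑ i ∈ Finset.range P, u i := by
  induction q with
  | zero => simp
  | succ q ih =>
    rw [add_mul, one_mul, Finset.sum_range_add, ih]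
    have : ∀ i, u (q * P + i) = u i := by
      intro i
      clear ih
      induction q with
      | zero => simp
      | succ q ih => rw [← ih, ← h (q * P + i)]; congr 1; ring
    simp only [this]
    push_cast; ring

lemma sl_neg {f g : ℤ × ℤ × ℤ} (h : SLEquiv f g) :
    SLEquiv (-f) (-g) := by
  obtain ⟨a, b, c, d, h, h'⟩ := h
  refine ⟨a, b, c, d, h, fun x y => ?_⟩
  have e : ∀ f : ℤ × ℤ × ℤ, ∀ x y, qval (-f) x y = - qval f x y := by
    intro f x y; simp only [qval, Prod.fst_neg, Prod.snd_neg]; ring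
  rw [e, e, h']

lemma sl_antip {f g : ℤ × ℤ × ℤ} (h : SLEquiv f g) :
    SLEquiv (antipF f) (antipF g) := by
  obtain ⟨a, b, c, d, h, h'⟩ := h
  refine ⟨d, c, b, a, by linarith, fun x y => ?_⟩
  have e : ∀ f : ℤ × ℤ × ℤ, ∀ x y, qval (antipF f) x y = - qval f y x := by
    intro f x y; simp only [qval, antipF]; ring
  rw [e, e, h', add_comm (a * y), add_comm (c * y)]

lemma exists_sigma {D : ℤ} (f : ℤ × ℤ × ℤ) (h : SLEquiv f (adjF f) ∨ SLEquiv f (antipF f)) :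
    ∃ σ : ℤ × ℤ × ℤ → ℤ × ℤ × ℤ, (∀ g, SLEquiv f g → SLEquiv f (σ g)) ∧ (∀ g, σ (σ g) = g) ∧
    (∀ g, NegV D g → Good D (σ g)) ∧ (∀ g, Good D g → NegV D (σ g)) := by
  rcases h with h | h
  · have h2 : SLEquiv (adjF f) (-f) := ⟨0, 1, -1, 0, by norm_num, fun x y => by
      simp only [qval, adjF, Prod.fst_neg, Prod.snd_neg]; ring⟩
    refine ⟨fun g => -g, fun g hg => sl_trans (sl_trans h h2) (sl_neg hg), fun g => neg_neg g, ?_, ?_⟩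
    · rintro g ⟨h1, h2, h3, rfl⟩
      refine ⟨?_, ?_, ?_, ?_⟩ <;> simp only [formDisc, Prod.fst_neg, Prod.snd_neg] <;>
        first | linarith | ring
    · rintro g ⟨h1, h2, h3, rfl⟩
      refine ⟨?_, ?_, ?_, ?_⟩ <;> simp only [formDisc, Prod.fst_neg, Prod.snd_neg] <;>
        first | linarith | ring
  · refine ⟨antipF, fun g hg => sl_trans h (sl_antip hg), fun g => by simp [antipF], ?_, ?_⟩
    · rintro g ⟨h1, h2, h3, rfl⟩
      refine ⟨?_, ?_, ?_, ?_⟩ <;> simp only [formDisc, antipF] <;>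
        first | linarith | ring
    · rintro g ⟨h1, h2, h3, rfl⟩
      refine ⟨?_, ?_, ?_, ?_⟩ <;> simp only [formDisc, antipF] <;>
        first | linarith | ring

lemma main_sum (f : ℤ × ℤ × ℤ) (hred : ReducedForm f) (hsq : ¬ IsSquare (formDisc f))
    (h : SLEquiv f (adjF f) ∨ SLEquiv f (antipF f)) (s : List ℤ)
    (hs : IsPurelyPeriodicMCF s (xiPlus f)) : s.sum = 3 * (s.length : ℤ) := by
  obtain ⟨r1, r2, r3, r4⟩ := hred
  let x : X (formDisc f) := ⟨f, r1, r2, by linarith, rfl⟩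
  obtain ⟨σ, a1, a2, a3, a4⟩ := exists_sigma (D := formDisc f) f h
  have e1 := sum_cls hsq x σ a1 a2 a3 a4
  obtain ⟨P, hP, hper, hcard, hsum⟩ := sum_orbit hsq x
  rw [hsum, hcard] at e1
  obtain ⟨hne, hterm, _⟩ := hs
  have hcc : ∀ i, cc ((stp hsq)^[i] x).1 = mcfTerm (xiPlus f) i := by
    intro i
    rw [mcfTerm, show minusIter (xiPlus f) i = _ from iter_stp hsq x i, cc]
  have p1 : ∀ j, mcfTerm (xiPlus f) (j + P) = mcfTerm (xiPlus f) j := by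
    intro j
    rw [← hcc, ← hcc, Function.iterate_add_apply, hper]
  have p2 : ∀ j, mcfTerm (xiPlus f) (j + s.length) = mcfTerm (xiPlus f) j := by
    intro j
    rw [hterm, hterm, Nat.add_mod_right]
  have s1 := sum_periodic _ P p1 s.length
  have s2 := sum_periodic _ s.length p2 P
  have s3 : ∑ i ∈ Finset.range s.length, mcfTerm (xiPlus f) i = s.sum := by
    rw [← Fin.sum_univ_getElem, ← Fin.sum_univ_eq_sum_range]
    apply Finset.sum_congr rfl
    intro i _
    rw [hterm, Nat.mod_eq_of_lt i.2, List.getD_eq_getElem _ _ i.2]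
  have s4 : ∑ i ∈ Finset.range P, mcfTerm (xiPlus f) i = 3 * P := by
    simp only [hcc, Finset.sum_sub_distrib] at e1
    simp at e1
    linarith
  rw [s4] at s1
  rw [s3, mul_comm P, s1] at s2
  have : (P : ℤ) * (s.sum - 3 * s.length) = 0 := by linarith
  rcases mul_eq_zero.1 this with h | h
  · lia
  · lia

end MCF

/-- If the class of a reduced form is supersymmetric, antisymmetric or
`(m+n)`-symmetric, and `(c₁, …, c_t)` is the period of the minus continued fraction
of `ξ⁺`, then `c₁ + ⋯ + c_t = 3t`. -/
theorem statement19 (m n k : ℤ) (hred : ReducedForm (m, n, k))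
    (hpos : 0 < formDisc (m, n, k)) (hsq : ¬ IsSquare (formDisc (m, n, k)))
    (hsym :
      (SLEquiv (m, n, k) (conjF (m, n, k)) ∧ SLEquiv (m, n, k) (adjF (m, n, k))) ∨
      (SLEquiv (m, n, k) (antipF (m, n, k)) ∧ ¬ SLEquiv (m, n, k) (conjF (m, n, k)) ∧
        ¬ SLEquiv (m, n, k) (adjF (m, n, k))) ∨
      (SLEquiv (m, n, k) (adjF (m, n, k)) ∧ ¬ SLEquiv (m, n, k) (conjF (m, n, k))))
    (s : List ℤ) (hs : IsPurelyPeriodicMCF s (xiPlus (m, n, k))) :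
    s.sum = 3 * (s.length : ℤ) := by
  refine MCF.main_sum (m, n, k) hred hsq ?_ s hs
  rcases hsym with h | h | h
  · exact Or.inl h.2
  · exact Or.inr h.1
  · exact Or.inl h.1
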